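/- arXiv:2411.01246 — 3 statements merged into one kernel-verified Lean document; each statement's English description precedes it below -/
import Mathlib

section
/- For all positive natural numbers x and y and every precision p ≥ 1, if b(x) < b(y) (i.e., x and y have different orders of magnitude, with x's highest-order bit strictly lower than y's), then round_p(x) < round_p(y); that is, values of different orders of magnitude remain distinct after rounding. -/
/-- Position of the highest-order nonzero bit of `x`: `b(x) = ⌊log₂ x⌋ + 1`. -/
def bpos (x : ℕ) : ℕ := Nat.log 2 x + 1

/-- Rounding of `x` to precision `p`: keep the `p` most significant bits,
zeroing out the `b(x) - p` lowest-order bits. -/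
def roundP (p x : ℕ) : ℕ :=
  if bpos x ≤ p then x else 2 ^ (bpos x - p) * (x / 2 ^ (bpos x - p))

theorem roundP_lt_of_bpos_lt (x y p : ℕ) (hx : 0 < x) (hy : 0 < y) (hp : 1 ≤ p)
    (hb : bpos x < bpos y) : roundP p x < roundP p y := by
  have h1 : roundP p x ≤ x := by
    unfold roundP
    split_ifs
    · exact le_rfl
    · exact Nat.mul_div_le _ _
  have h2 : x < 2 ^ (Nat.log 2 x + 1) := Nat.lt_pow_succ_log_self (by norm_num) x
  have h3 : 2 ^ (Nat.log 2 x + 1) ≤ 2 ^ Nat.log 2 y := by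
    unfold bpos at hb
    exact Nat.pow_le_pow_right (by norm_num) (by omega)
  have h5 : 2 ^ Nat.log 2 y ≤ y := Nat.pow_log_le_self 2 hy.ne'
  have h4 : 2 ^ Nat.log 2 y ≤ roundP p y := by
    unfold roundP
    split_ifs with h
    · exact h5
    · have hle : bpos y - p ≤ Nat.log 2 y := by
        unfold bpos
        omega
      obtain ⟨c, hc⟩ := pow_dvd_pow 2 hle
      rw [hc] at h5 ⊢
      apply Nat.mul_le_mul_left
      rw [Nat.le_div_iff_mul_le (by positivity), mul_comm]
      exact h5
  omega
end

section
/- Let U ≥ 1 be a natural number and let p ≥ 1 be a precision with p ≤ ⌈log₂(U+1)⌉. Then the number of distinct rounded values of integers in the range 1, …, U is at most (⌈log₂(U+1)⌉ − p + 1) · 2^p; that is, the cardinality of the image of the set {1, 2, …, U} under the map x ↦ round_p(x) is at most (⌈log₂(U+1)⌉ − p + 1) · 2^p. -/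
theorem roundP_image_card_le (U p : ℕ) (hU : 1 ≤ U) (hp : 1 ≤ p)
    (hpU : p ≤ Nat.clog 2 (U + 1)) :
    ((Finset.Icc 1 U).image (roundP p)).card ≤ (Nat.clog 2 (U + 1) - p + 1) * 2 ^ p := by
  have hsub : (Finset.Icc 1 U).image (roundP p) ⊆
      ((Finset.range (Nat.clog 2 (U + 1) - p + 1)) ×ˢ (Finset.range (2 ^ p))).image
        (fun q : ℕ × ℕ => 2 ^ q.1 * q.2) := by
    intro y hy
    obtain ⟨x, hx, rfl⟩ := Finset.mem_image.mp hy
    obtain ⟨h1, h2⟩ := Finset.mem_Icc.mp hx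
    have hc : U + 1 ≤ 2 ^ Nat.clog 2 (U + 1) := Nat.le_pow_clog (by norm_num) _
    have hb : bpos x ≤ Nat.clog 2 (U + 1) := by
      have : Nat.log 2 x < Nat.clog 2 (U + 1) :=
        Nat.log_lt_of_lt_pow (by omega) (by omega)
      unfold bpos
      omega
    have hlt : x < 2 ^ bpos x := Nat.lt_pow_succ_log_self (by norm_num) x
    refine Finset.mem_image.mpr ⟨(bpos x - p, x / 2 ^ (bpos x - p)), ?_, ?_⟩
    · simp only [Finset.mem_product, Finset.mem_range]
      refine ⟨by omega, ?_⟩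
      rw [Nat.div_lt_iff_lt_mul (by positivity), ← pow_add]
      exact lt_of_lt_of_le hlt (Nat.pow_le_pow_right (by norm_num) (by omega))
    · unfold roundP
      split_ifs with h
      · simp [Nat.sub_eq_zero_of_le h]
      · rfl
  refine (Finset.card_le_card hsub).trans (Finset.card_image_le.trans ?_)
  simp
end

section
/- Rounding to precision p is monotone: for all positive natural numbers x and y with x ≤ y and every precision p ≥ 1, round_p(x) ≤ round_p(y). -/
theorem roundP_le_self' (p x : ℕ) : roundP p x ≤ x := by
  unfold roundP
  split_ifs
  · exact le_rfl
  · exact Nat.mul_div_le _ _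

theorem pow_log_le_roundP (p y : ℕ) (hy : 0 < y) (hp : 1 ≤ p) :
    2 ^ Nat.log 2 y ≤ roundP p y := by
  have h : 2 ^ Nat.log 2 y ≤ y := Nat.pow_log_le_self 2 hy.ne'
  unfold roundP
  split_ifs
  · exact h
  · have hk : bpos y - p ≤ Nat.log 2 y := by unfold bpos; omega
    have hd : 2 ^ (bpos y - p) ∣ 2 ^ Nat.log 2 y := pow_dvd_pow 2 hk
    calc 2 ^ Nat.log 2 y = 2 ^ (bpos y - p) * (2 ^ Nat.log 2 y / 2 ^ (bpos y - p)) :=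
          (Nat.mul_div_cancel' hd).symm
      _ ≤ _ := Nat.mul_le_mul_left _ (Nat.div_le_div_right h)

theorem roundP_monotone (x y p : ℕ) (hx : 0 < x) (hy : 0 < y) (hp : 1 ≤ p)
    (hxy : x ≤ y) : roundP p x ≤ roundP p y := by
  rcases (Nat.log_mono_right (b := 2) hxy).eq_or_lt with h | h
  · have hb : bpos x = bpos y := by unfold bpos; rw [h]
    unfold roundP
    rw [hb]
    split_ifs
    · exact hxy
    · exact Nat.mul_le_mul_left _ (Nat.div_le_div_right hxy)
  · have h1 : x < 2 ^ (Nat.log 2 x + 1) := Nat.lt_pow_succ_log_self (by norm_num) x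
    have h2 : 2 ^ (Nat.log 2 x + 1) ≤ 2 ^ Nat.log 2 y :=
      Nat.pow_le_pow_right (by norm_num) h
    exact (roundP_le_self' p x).trans
      (h1.le.trans (h2.trans (pow_log_le_roundP p y hy hp)))
end
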